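/- Correctness of the bidirectional type system, checking part: if Γ ⊢ a ⇐ A, ⊢ Γ, and Γ ⊢ A : Type, then Γ ⊢ a : A. -/

import Mathlib

/-!
By mutual induction on the bidirectional derivations, checking is sound at well-formed types, and
inference in a well-formed context yields both `Γ ⊢ a : A` and `Γ ⊢ A : Type`. The second conclusion
(regularity) is what makes the induction go through: there is no conversion rule, so
`Γ ⊢ (x:A) → B : Type` inverts to `Γ ⊢ A : Type` and `Γ, x:A ⊢ B : Type`, which gives the
side condition of the λ rule and the well-formedness of the expected type of an argument.

Regularity needs weakening (variables) and the substitution lemma (applications). Both are obtained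
for simultaneous renamings and substitutions, `HasType.ren` and `HasType.sub`, since the one-variable
operations `Tm.lift` and `Tm.subst` are instances (`Tm.lift_eq`, `Tm.subst_eq`) and simultaneous
substitutions compose without any index arithmetic.
-/

/-- Terms of the core pi-forall language, with de Bruijn indices for variables.
    `lam a` binds one variable in `a`, and `pi A B` binds one variable in `B`.
    (De Bruijn representation identifies terms up to α-equivalence.) -/
inductive Tm : Type
  | var : Nat → Tm
  | lam : Tm → Tm
  | app : Tm → Tm → Tm
  | pi  : Tm → Tm → Tm
  | type : Tm
  | annot : Tm → Tm → Tm
  deriving DecidableEq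

namespace Tm

/-- `lift d c t` shifts by `d` every variable of `t` whose index is at least `c`. -/
def lift (d c : Nat) : Tm → Tm
  | var k => if k < c then var k else var (k + d)
  | lam a => lam (lift d (c + 1) a)
  | app a b => app (lift d c a) (lift d c b)
  | pi A B => pi (lift d c A) (lift d (c + 1) B)
  | type => type
  | annot a A => annot (lift d c a) (lift d c A)

/-- `subst a x b` is the capture-avoiding substitution `b[a/x]` of `a`
    for variable `x` in `b` (indices above `x` are decremented). -/
def subst (a : Tm) (x : Nat) : Tm → Tm
  | var k => if k = x then lift x 0 a else if x < k then var (k - 1) else var k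
  | lam b => lam (subst a (x + 1) b)
  | app b c => app (subst a x b) (subst a x c)
  | pi A B => pi (subst a x A) (subst a (x + 1) B)
  | type => type
  | annot b A => annot (subst a x b) (subst a x A)

end Tm

/-- A typing context is a list of types; the head is the type of variable 0. -/
abbrev Ctx := List Tm

/-- `lookupTy Γ x = some A` means `x : A ∈ Γ` (with the type suitably shifted
    so that it is well-scoped in the whole context `Γ`). -/
def lookupTy : Ctx → Nat → Option Tm
  | [], _ => none
  | A :: _, 0 => some (Tm.lift 1 0 A)
  | _ :: Γ, k + 1 => (lookupTy Γ k).map (Tm.lift 1 0)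

/-- The declarative typing judgment `Γ ⊢ a : A`. -/
inductive HasType : Ctx → Tm → Tm → Prop
  | var {Γ x A} : lookupTy Γ x = some A → HasType Γ (.var x) A
  | type {Γ} : HasType Γ .type .type
  | pi {Γ A B} : HasType Γ A .type → HasType (A :: Γ) B .type →
      HasType Γ (.pi A B) .type
  | lam {Γ A a B} : HasType (A :: Γ) a B → HasType Γ A .type →
      HasType Γ (.lam a) (.pi A B)
  | app {Γ a b A B} : HasType Γ a (.pi A B) → HasType Γ b A →
      HasType Γ (.app a b) (Tm.subst b 0 B)
  | annot {Γ a A} : HasType Γ a A → HasType Γ A .type →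
      HasType Γ (.annot a A) A

/-- The judgment `⊢ Γ`: the context type checks. -/
inductive CtxWf : Ctx → Prop
  | nil : CtxWf []
  | cons {Γ A} : CtxWf Γ → HasType Γ A .type → CtxWf (A :: Γ)

mutual
/-- The bidirectional inference judgment `Γ ⊢ a ⇒ A`. -/
inductive Infers : Ctx → Tm → Tm → Prop
  | var {Γ x A} : lookupTy Γ x = some A → Infers Γ (.var x) A
  | type {Γ} : Infers Γ .type .type
  | pi {Γ A B} : Checks Γ A .type → Checks (A :: Γ) B .type →
      Infers Γ (.pi A B) .type
  | app {Γ a b A B} : Infers Γ a (.pi A B) → Checks Γ b A →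
      Infers Γ (.app a b) (Tm.subst b 0 B)
  | annot {Γ a A} : Checks Γ A .type → Checks Γ a A →
      Infers Γ (.annot a A) A

/-- The bidirectional checking judgment `Γ ⊢ a ⇐ A`. -/
inductive Checks : Ctx → Tm → Tm → Prop
  | lam {Γ A a B} : Checks (A :: Γ) a B → Checks Γ (.lam a) (.pi A B)
  | infer {Γ a A} : (∀ b, a ≠ .lam b) → Infers Γ a A → Checks Γ a A
end

/-! ### Simultaneous renamings and substitutions -/

namespace Tm

/-- A renaming extended under a binder. -/
def upr (r : Nat → Nat) : Nat → Nat
  | 0 => 0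
  | k + 1 => r k + 1

/-- Simultaneous renaming of the free variables of a term. -/
def ren (r : Nat → Nat) : Tm → Tm
  | var k => var (r k)
  | lam a => lam (ren (upr r) a)
  | app a b => app (ren r a) (ren r b)
  | pi A B => pi (ren r A) (ren (upr r) B)
  | type => type
  | annot a A => annot (ren r a) (ren r A)

/-- A substitution extended under a binder. -/
def ups (σ : Nat → Tm) : Nat → Tm
  | 0 => var 0
  | k + 1 => ren Nat.succ (σ k)

/-- Simultaneous capture-avoiding substitution. -/
def sub (σ : Nat → Tm) : Tm → Tm
  | var k => σ k
  | lam a => lam (sub (ups σ) a)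
  | app a b => app (sub σ a) (sub σ b)
  | pi A B => pi (sub σ A) (sub (ups σ) B)
  | type => type
  | annot a A => annot (sub σ a) (sub σ A)

theorem upr_comp (r s : Nat → Nat) : upr r ∘ upr s = upr (r ∘ s) := by
  funext k; cases k <;> rfl

theorem ren_ren (t : Tm) (r s : Nat → Nat) : ren r (ren s t) = ren (r ∘ s) t := by
  induction t generalizing r s <;> simp_all [ren, upr_comp]

theorem ups_comp_upr (σ : Nat → Tm) (r : Nat → Nat) : ups σ ∘ upr r = ups (σ ∘ r) := by
  funext k; cases k <;> rfl

theorem sub_ren (t : Tm) (σ : Nat → Tm) (r : Nat → Nat) :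
    sub σ (ren r t) = sub (σ ∘ r) t := by
  induction t generalizing σ r <;> simp_all [ren, sub, ups_comp_upr]

theorem ren_comp_ups (r : Nat → Nat) (σ : Nat → Tm) :
    ren (upr r) ∘ ups σ = ups (ren r ∘ σ) := by
  funext k
  cases k with
  | zero => rfl
  | succ k =>
    simp only [Function.comp, ups, ren_ren]
    rfl

theorem ren_sub (t : Tm) (r : Nat → Nat) (σ : Nat → Tm) :
    ren r (sub σ t) = sub (ren r ∘ σ) t := by
  induction t generalizing σ r <;> simp_all [ren, sub, ren_comp_ups]

theorem sub_comp_ups (σ τ : Nat → Tm) : sub (ups σ) ∘ ups τ = ups (sub σ ∘ τ) := by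
  funext k
  cases k with
  | zero => rfl
  | succ k =>
    simp only [Function.comp, ups, ren_sub, sub_ren]
    rfl

theorem sub_sub (t : Tm) (σ τ : Nat → Tm) : sub σ (sub τ t) = sub (sub σ ∘ τ) t := by
  induction t generalizing σ τ <;> simp_all [sub, sub_comp_ups]

theorem ups_var : ups var = var := by
  funext k; cases k <;> rfl

theorem sub_var (t : Tm) : sub var t = t := by
  induction t <;> simp_all [sub, ups_var]

theorem ren_id (t : Tm) : ren id t = t := by
  have h : upr id = id := by funext k; cases k <;> rfl
  induction t <;> simp_all [ren]

theorem lift_eq (d c : Nat) (t : Tm) :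
    lift d c t = ren (fun k => if k < c then k else k + d) t := by
  have h (c : Nat) : upr (fun k => if k < c then k else k + d) =
      fun k => if k < c + 1 then k else k + d := by
    funext k
    cases k with
    | zero => simp [upr]
    | succ k => simp only [upr]; split_ifs <;> omega
  induction t generalizing c <;> simp_all [lift, ren]
  split_ifs <;> rfl

theorem lift_one (t : Tm) : lift 1 0 t = ren Nat.succ t := by
  simp [lift_eq]

theorem lift_zero (t : Tm) : lift 0 0 t = t := by
  rw [lift_eq]
  simp only [Nat.add_zero, ite_self]
  exact ren_id t

/-- The substitution of `a` for variable `0`, lowering all other variables. -/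
def inst (a : Tm) : Nat → Tm
  | 0 => a
  | k + 1 => var k

/-- Stated at every index `x`, so that the induction passes under binders. -/
theorem subst_eq_sub (a : Tm) (x : Nat) (t : Tm) :
    subst a x t =
      sub (fun k => if k = x then lift x 0 a else if x < k then var (k - 1) else var k) t := by
  have h (x : Nat) :
      ups (fun k => if k = x then lift x 0 a else if x < k then var (k - 1) else var k) =
      fun k => if k = x + 1 then lift (x + 1) 0 a
        else if x + 1 < k then var (k - 1) else var k := by
    funext k
    cases k with
    | zero => simp [ups]
    | succ k =>
      simp only [ups]
      split_ifs <;> try omega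
      · simp [lift_eq, ren_ren, Function.comp_def, Nat.succ_eq_add_one, Nat.add_assoc]
      · simp only [ren, var.injEq]; omega
      · rfl
  induction t generalizing x <;> simp_all [subst, sub]

theorem subst_eq (a t : Tm) : subst a 0 t = sub (inst a) t := by
  rw [subst_eq_sub]
  congr 1
  funext k
  cases k <;> simp [inst, lift_zero]

theorem ren_subst (r : Nat → Nat) (a t : Tm) :
    ren r (subst a 0 t) = subst (ren r a) 0 (ren (upr r) t) := by
  rw [subst_eq, subst_eq, ren_sub, sub_ren]
  congr 1
  funext k; cases k <;> rfl

theorem sub_subst (σ : Nat → Tm) (a t : Tm) :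
    sub σ (subst a 0 t) = subst (sub σ a) 0 (sub (ups σ) t) := by
  rw [subst_eq, subst_eq, sub_sub, sub_sub]
  congr 1
  funext k
  cases k with
  | zero => rfl
  | succ k =>
    simp only [Function.comp, ups, sub_ren, inst, sub]
    exact (sub_var _).symm

end Tm

/-! ### Weakening, substitution and inversion for declarative typing -/

open Tm in
/-- Generalized weakening: typing is stable under type-preserving renamings. -/
theorem HasType.ren {Γ : Ctx} {a A : Tm} (h : HasType Γ a A) :
    ∀ {Δ : Ctx} {r : Nat → Nat},
      (∀ x B, lookupTy Γ x = some B → lookupTy Δ (r x) = some (B.ren r)) →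
      HasType Δ (a.ren r) (A.ren r) := by
  have up {Γ Δ : Ctx} {r : Nat → Nat} (C : Tm)
      (hr : ∀ x B, lookupTy Γ x = some B → lookupTy Δ (r x) = some (B.ren r)) :
      ∀ x B, lookupTy (C :: Γ) x = some B →
        lookupTy (C.ren r :: Δ) (upr r x) = some (B.ren (upr r)) := by
    intro x B hx
    cases x with
    | zero =>
      simp only [lookupTy, Option.some.injEq] at hx
      subst hx
      simp only [lookupTy, upr, lift_one, ren_ren]
      rfl
    | succ x =>
      simp only [lookupTy, Option.map_eq_some_iff] at hx
      obtain ⟨B, hB, rfl⟩ := hx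
      simp only [lookupTy, upr, hr x B hB, Option.map_some, lift_one, ren_ren]
      rfl
  induction h with
  | var hx => exact fun hr => .var (hr _ _ hx)
  | type => exact fun _ => .type
  | pi _ _ ihA ihB => exact fun hr => .pi (ihA hr) (ihB (up _ hr))
  | lam _ _ iha ihA => exact fun hr => .lam (iha (up _ hr)) (ihA hr)
  | app _ _ iha ihb =>
    intro Δ r hr
    rw [ren_subst]
    exact .app (iha hr) (ihb hr)
  | annot _ _ iha ihA => exact fun hr => .annot (iha hr) (ihA hr)

theorem HasType.weaken {Γ : Ctx} {a A : Tm} (C : Tm) (h : HasType Γ a A) :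
    HasType (C :: Γ) (a.ren Nat.succ) (A.ren Nat.succ) :=
  h.ren fun x B hx => by simp [lookupTy, hx, Tm.lift_one]

open Tm in
/-- Typing is stable under well-typed simultaneous substitutions. -/
theorem HasType.sub {Γ : Ctx} {a A : Tm} (h : HasType Γ a A) :
    ∀ {Δ : Ctx} {σ : Nat → Tm},
      (∀ x B, lookupTy Γ x = some B → HasType Δ (σ x) (B.sub σ)) →
      HasType Δ (a.sub σ) (A.sub σ) := by
  have up {Γ Δ : Ctx} {σ : Nat → Tm} (C : Tm)
      (hσ : ∀ x B, lookupTy Γ x = some B → HasType Δ (σ x) (B.sub σ)) :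
      ∀ x B, lookupTy (C :: Γ) x = some B →
        HasType (C.sub σ :: Δ) (ups σ x) (B.sub (ups σ)) := by
    intro x B hx
    cases x with
    | zero =>
      simp only [lookupTy, Option.some.injEq] at hx
      subst hx
      refine .var ?_
      simp only [lookupTy, lift_one, ren_sub, sub_ren]
      rfl
    | succ x =>
      simp only [lookupTy, Option.map_eq_some_iff] at hx
      obtain ⟨B, hB, rfl⟩ := hx
      have h := (hσ x B hB).weaken (C.sub σ)
      rw [ren_sub] at h
      rw [lift_one, sub_ren]
      exact h
  induction h with
  | var hx => exact fun hσ => hσ _ _ hx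
  | type => exact fun _ => .type
  | pi _ _ ihA ihB => exact fun hσ => .pi (ihA hσ) (ihB (up _ hσ))
  | lam _ _ iha ihA => exact fun hσ => .lam (iha (up _ hσ)) (ihA hσ)
  | app _ _ iha ihb =>
    intro Δ σ hσ
    rw [sub_subst]
    exact .app (iha hσ) (ihb hσ)
  | annot _ _ iha ihA => exact fun hσ => .annot (iha hσ) (ihA hσ)

open Tm in
/-- The substitution lemma for the most recently bound variable. -/
theorem HasType.subst {Γ : Ctx} {b A a B : Tm} (ha : HasType (A :: Γ) a B)
    (hb : HasType Γ b A) : HasType Γ (Tm.subst b 0 a) (Tm.subst b 0 B) := by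
  rw [subst_eq, subst_eq]
  refine ha.sub fun x C hx => ?_
  have h (D : Tm) : Tm.sub (inst b) (Tm.ren Nat.succ D) = D :=
    (sub_ren _ _ _).trans (sub_var D)
  cases x with
  | zero =>
    simp only [lookupTy, Option.some.injEq] at hx
    subst hx
    rw [lift_one, h]
    exact hb
  | succ x =>
    simp only [lookupTy, Option.map_eq_some_iff] at hx
    obtain ⟨C, hC, rfl⟩ := hx
    rw [lift_one, h]
    exact .var hC

/-- Every type assigned by a well-formed context is itself well-formed in that context. -/
theorem CtxWf.lookup {Γ : Ctx} (hΓ : CtxWf Γ) :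
    ∀ {x A}, lookupTy Γ x = some A → HasType Γ A .type := by
  induction hΓ with
  | nil => intro x A h; simp [lookupTy] at h
  | cons _ hA ih =>
    intro x B h
    cases x with
    | zero =>
      simp only [lookupTy, Option.some.injEq] at h
      subst h
      rw [Tm.lift_one]
      exact hA.weaken _
    | succ x =>
      simp only [lookupTy, Option.map_eq_some_iff] at h
      obtain ⟨B, hB, rfl⟩ := h
      rw [Tm.lift_one]
      exact (ih hB).weaken _

/-- Without a conversion rule, inversion for `pi` is immediate. -/
theorem HasType.pi_inv {Γ : Ctx} {A B C : Tm} (h : HasType Γ (.pi A B) C) :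
    HasType Γ A .type ∧ HasType (A :: Γ) B .type := by
  cases h with
  | pi hA hB => exact ⟨hA, hB⟩

/-! ### Soundness of the bidirectional system -/

/-- Correctness of the bidirectional type system, checking part:
    if `Γ ⊢ a ⇐ A`, `⊢ Γ`, and `Γ ⊢ A : Type`, then `Γ ⊢ a : A`. -/
theorem checks_sound {Γ : Ctx} {a A : Tm}
    (h : Checks Γ a A) (hΓ : CtxWf Γ) (hA : HasType Γ A .type) :
    HasType Γ a A := by
  refine Checks.rec
    (motive_1 := fun Γ a A _ => CtxWf Γ → HasType Γ a A ∧ HasType Γ A .type)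
    (motive_2 := fun Γ a A _ => CtxWf Γ → HasType Γ A .type → HasType Γ a A)
    ?_ ?_ ?_ ?_ ?_ ?_ ?_ h hΓ hA
  · exact fun hx hΓ => ⟨.var hx, hΓ.lookup hx⟩
  · exact fun _ => ⟨.type, .type⟩
  · intro Γ A B _ _ ihA ihB hΓ
    have hA := ihA hΓ .type
    exact ⟨.pi hA (ihB (.cons hΓ hA) .type), .type⟩
  · intro Γ a b A B _ _ iha ihb hΓ
    obtain ⟨ha, hpi⟩ := iha hΓ
    obtain ⟨hA, hB⟩ := hpi.pi_inv
    have hb := ihb hΓ hA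
    exact ⟨.app ha hb, hB.subst hb⟩
  · intro Γ a A _ _ ihA iha hΓ
    have hA := ihA hΓ .type
    exact ⟨.annot (iha hΓ hA) hA, hA⟩
  · intro Γ A a B _ iha hΓ hpi
    obtain ⟨hA, hB⟩ := hpi.pi_inv
    exact .lam (iha (.cons hΓ hA) hB) hA
  · exact fun _ _ ih hΓ _ => (ih hΓ).1
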